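/- Let K be a compact Hausdorff space such that K = ⋃_{n=1}^∞ H_n, where each H_n is open in its closure cl(H_n) and every point of H_n has a local base of connected sets relative to cl(H_n). Then K has the Bishop property (B). -/

import Mathlib

open Set Topology Filter

/-- `f ≺ g`: `f ≠ g` and `f` agrees with `g` on the support of `f` (the closure of
the set where `f` is nonzero). -/
def Prec {K : Type*} [TopologicalSpace K] (f g : C(K, ℝ)) : Prop :=
  f ≠ g ∧ ∀ t ∈ closure {t | f t ≠ 0}, f t = g t

/-- `f ≺_δ g`: `f ≺ g` and `‖f - g‖ ≥ δ`. -/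
def PrecDelta {K : Type*} [TopologicalSpace K] [CompactSpace K] (δ : ℝ) (f g : C(K, ℝ)) : Prop :=
  Prec f g ∧ δ ≤ ‖f - g‖

/-- `F` is a `δ`-`≺`-chain. -/
def IsPrecChain {K : Type*} [TopologicalSpace K] [CompactSpace K] (δ : ℝ)
    (F : Set C(K, ℝ)) : Prop :=
  ∀ f ∈ F, ∀ g ∈ F, f ≠ g → PrecDelta δ f g ∨ PrecDelta δ g f

/-- A compact Hausdorff space has the Bishop property (B) if for every `δ > 0`
every `δ`-`≺`-chain in `C(K)` is countable. -/
def HasBishop (K : Type*) [TopologicalSpace K] [CompactSpace K] [T2Space K] : Prop :=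
  ∀ δ : ℝ, 0 < δ → ∀ F : Set C(K, ℝ), IsPrecChain δ F → F.Countable

/-- `t ∈ M` has a local base of connected sets relative to `M`: for every set `U`
open in `M` (with its subspace topology) containing `t`, there is a connected set `V`,
open in `M`, with `t ∈ V ⊆ U`. -/
def HasConnBase {K : Type*} [TopologicalSpace K] (M : Set K) (t : K) (ht : t ∈ M) : Prop :=
  ∀ U : Set ↥M, IsOpen U → (⟨t, ht⟩ : ↥M) ∈ U →
    ∃ V : Set ↥M, IsOpen V ∧ IsConnected V ∧ (⟨t, ht⟩ : ↥M) ∈ V ∧ V ⊆ U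

/-
Fix `δ > 0` and a `δ`-`≺`-chain `(f i)`, and put `A i = {f i = 0}` and `B j = {δ ≤ |f j|}`. These
closed sets decrease, respectively increase, with the index, and `A i ∩ B j` is nonempty for
`i < j`. Local connectedness of `H n` says that near each of its points no `f k` takes both the
value zero and values of size at least `δ`; so a compact subset of `H n ∩ A i ∩ B j` meets only
finitely many of the sets `A k ∩ B l` belonging to non-overlapping intervals `[k, l] ⊆ [i, j]`.

Suppose the index set is uncountable. If some point has uncountably many others at a countable
distance above it, these form an order in which every sequence is bounded. The sets missing all
`A i ∩ B j` with `i` large then form a proper `σ`-ideal, and treating the pieces `H n` one at a time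
leaves a closed set outside the ideal which meets every `H n` in a member of it, which is absurd.
Reversing the order handles points at a countable distance below. Otherwise every uncountable
interval splits into two uncountable ones. A minimal closed set `P` meeting every `A i ∩ B j` with
`[i, j]` uncountable has, by Baire, a nonempty relatively open part inside a single `H n`. By
minimality that part contains `P ∩ A i ∩ B j` for some such `[i, j]`, and splitting `[i, j]`
repeatedly yields infinitely many non-overlapping intervals.
-/

theorem exists_seq_of_forall_exists_between {ι : Type*} {r : ι → ι → Prop}
    (hr : ∀ i j, r i j → ∃ k, r i k ∧ r k j) {i j : ι} (hij : r i j) :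
    ∃ c : ℕ → ι, c 0 = i ∧ ∀ n, r (c n) (c (n + 1)) ∧ r (c n) j := by
  choose! mid hmid using hr
  let c : ℕ → ι := fun n ↦ (mid · j)^[n] i
  have hc_succ (n : ℕ) : c (n + 1) = mid (c n) j := Function.iterate_succ_apply' (mid · j) n i
  have hc (n : ℕ) : r (c n) j := by
    induction n with
    | zero => exact hij
    | succ n ih => exact hc_succ n ▸ (hmid _ _ ih).2
  exact ⟨c, rfl, fun n ↦ ⟨hc_succ n ▸ (hmid _ _ (hc n)).1, hc n⟩⟩

section Order

variable {ι : Type*} [LinearOrder ι]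

theorem exists_forall_lt_of_countable_Iic [Uncountable ι] (hι : ∀ x : ι, (Iic x).Countable)
    (u : ℕ → ι) : ∃ s, ∀ n, u n < s := by
  by_contra! hu
  exact not_countable_univ ((countable_iUnion fun n ↦ hι (u n)).mono fun s _ ↦ mem_iUnion.2 (hu s))

theorem exists_not_countable_Icc_Icc (hι : ∀ x : ι, {y | (uIcc x y).Countable}.Countable)
    {i j : ι} (hij : ¬ (Icc i j).Countable) :
    ∃ k, ¬ (Icc i k).Countable ∧ ¬ (Icc k j).Countable := by
  by_contra! h
  refine hij (((hι i).union (hι j)).mono fun k hk ↦ ?_)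
  by_cases hik : (Icc i k).Countable
  · exact Or.inl (by rwa [mem_ofPred_eq, uIcc_of_le hk.1])
  · exact Or.inr (by rw [mem_ofPred_eq, uIcc_of_ge hk.2]; exact h k hik)

theorem exists_not_countable_Icc [Uncountable ι]
    (hι : ∀ x : ι, {y | (uIcc x y).Countable}.Countable) : ∃ i j : ι, ¬ (Icc i j).Countable := by
  by_contra! h
  obtain ⟨x⟩ : Nonempty ι := inferInstance
  exact not_countable_univ ((hι x).mono fun y _ ↦ h _ _)

theorem lt_of_not_countable_Icc {i j : ι} (hij : ¬ (Icc i j).Countable) : i < j := by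
  by_contra! hji
  exact hij (subsingleton_Icc_of_ge hji).countable

end Order

section Topology

variable {X : Type*} [TopologicalSpace X]

theorem exists_interior_nonempty_of_iUnion_isLocallyClosed [BaireSpace X] [Nonempty X]
    {κ : Type*} [Countable κ] {H : κ → Set X} (hH : ∀ n, IsLocallyClosed (H n))
    (hcover : ⋃ n, H n = univ) : ∃ n, (interior (H n)).Nonempty := by
  obtain ⟨n, hn⟩ := nonempty_interior_of_iUnion_of_closed (fun n ↦ isClosed_closure (s := H n))
    (univ_subset_iff.1 (hcover.ge.trans (iUnion_mono fun _ ↦ subset_closure)))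
  refine ⟨n, ((dense_coborder (s := H n)).inter_open_nonempty _ isOpen_interior hn).mono ?_⟩
  refine interior_maximal ?_ (isOpen_interior.inter (hH n).isOpen_coborder)
  exact (inter_subset_inter_left _ interior_subset).trans closure_inter_coborder.subset

theorem exists_isOpen_inter_subset_of_iUnion_isLocallyClosed [CompactSpace X] [T2Space X]
    {κ : Type*} [Countable κ] {H : κ → Set X} (hH : ∀ n, IsLocallyClosed (H n))
    (hcover : ⋃ n, H n = univ) {P : Set X} (hP : IsClosed P) (hPne : P.Nonempty) :
    ∃ n, ∃ W, IsOpen W ∧ (P ∩ W).Nonempty ∧ P ∩ W ⊆ H n := by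
  have := hPne.to_subtype
  have := isCompact_iff_compactSpace.1 hP.isCompact
  obtain ⟨n, x, hx⟩ := exists_interior_nonempty_of_iUnion_isLocallyClosed
    (H := fun n ↦ ((↑) : P → X) ⁻¹' H n) (fun n ↦ (hH n).preimage continuous_subtype_val)
    (by rw [← preimage_iUnion, hcover, preimage_univ])
  obtain ⟨W, hW, hWH⟩ := isOpen_induced_iff.1 (isOpen_interior (s := ((↑) : P → X) ⁻¹' H n))
  refine ⟨n, W, hW, ⟨x, x.2, hWH.ge hx⟩, fun y hy ↦ ?_⟩
  have hyW : (⟨y, hy.1⟩ : P) ∈ ((↑) : P → X) ⁻¹' W := hy.2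
  rw [hWH] at hyW
  exact interior_subset (s := ((↑) : P → X) ⁻¹' H n) hyW

theorem exists_minimal_isClosed_inter_nonempty [CompactSpace X] {𝓔 : Set (Set X)}
    (hclosed : ∀ S ∈ 𝓔, IsClosed S) (hne : ∀ S ∈ 𝓔, S.Nonempty) :
    ∃ P, Minimal (fun P ↦ IsClosed P ∧ ∀ S ∈ 𝓔, (P ∩ S).Nonempty) P := by
  refine zorn_superset {P | IsClosed P ∧ ∀ S ∈ 𝓔, (P ∩ S).Nonempty} fun c hc hchain ↦
    ⟨⋂₀ c, ⟨isClosed_sInter fun P hP ↦ (hc hP).1, fun S hS ↦ ?_⟩,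
      fun P hP ↦ sInter_subset_of_mem hP⟩
  rcases c.eq_empty_or_nonempty with rfl | hcne
  · simpa using hne S hS
  have := hcne.to_subtype
  have hdir : Directed (· ⊇ ·) fun P : c ↦ (P : Set X) ∩ S := by
    intro P Q
    rcases hchain.total P.2 Q.2 with h | h
    · exact ⟨P, subset_rfl, inter_subset_inter_left S h⟩
    · exact ⟨Q, inter_subset_inter_left S h, subset_rfl⟩
  have hclosed' (P : c) : IsClosed ((P : Set X) ∩ S) := (hc P.2).1.inter (hclosed S hS)
  rw [sInter_eq_iInter, iInter_inter]
  exact IsCompact.nonempty_iInter_of_directed_nonempty_isCompact_isClosed _ hdir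
    (fun P ↦ (hc P.2).2 S hS) (fun P ↦ (hclosed' P).isCompact) hclosed'

theorem exists_isClosed_inter_subset_of_iUnion_isLocallyClosed [CompactSpace X] [T2Space X]
    {κ : Type*} [Countable κ] {H : κ → Set X} (hH : ∀ n, IsLocallyClosed (H n))
    (hcover : ⋃ n, H n = univ) {𝓔 : Set (Set X)} (h𝓔 : 𝓔.Nonempty)
    (hclosed : ∀ S ∈ 𝓔, IsClosed S) (hne : ∀ S ∈ 𝓔, S.Nonempty) :
    ∃ P, IsClosed P ∧ (∀ S ∈ 𝓔, (P ∩ S).Nonempty) ∧ ∃ S ∈ 𝓔, ∃ n, P ∩ S ⊆ H n := by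
  obtain ⟨P, ⟨hP, hPne⟩, hmin⟩ := exists_minimal_isClosed_inter_nonempty hclosed hne
  obtain ⟨S₀, hS₀⟩ := h𝓔
  obtain ⟨n, W, hW, ⟨x, hxP, hxW⟩, hPW⟩ :=
    exists_isOpen_inter_subset_of_iUnion_isLocallyClosed hH hcover hP (hPne S₀ hS₀).left
  refine ⟨P, hP, hPne, ?_⟩
  by_contra! hS
  refine (hmin (y := P \ W) ⟨hP.sdiff hW, fun S hS' ↦ ?_⟩ sdiff_subset hxP).2 hxW
  obtain ⟨y, hy, hyH⟩ := not_subset.1 (hS S hS' n)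
  exact ⟨y, ⟨hy.1, fun hyW ↦ hyH (hPW ⟨hy.1, hyW⟩)⟩, hy.2⟩

end Topology

/-- A decreasing family `A` and an increasing family `B` of closed sets such that `A i` meets `B j`
whenever `i < j`. It abstracts the zero sets `{f i = 0}` and the sets `{δ ≤ |f j|}` of a
`δ`-`≺`-chain `(f i)`, in a form that survives reversing the order. -/
structure IsOverlappingPair {K ι : Type*} [TopologicalSpace K] [Preorder ι] (A B : ι → Set K) :
    Prop where
  isClosed_left : ∀ i, IsClosed (A i)
  isClosed_right : ∀ i, IsClosed (B i)
  antitone_left : Antitone A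
  monotone_right : Monotone B
  inter_nonempty : ∀ i j, i < j → (A i ∩ B j).Nonempty

/-- Each point of `M ∩ A i ∩ B j` has a neighbourhood in `M` which, for every `k ∈ [i, j]`, misses
`A k` or misses `B k`. This is what local connectedness of `M` provides for the zero sets and the
sets of large values of a `≺`-chain. -/
def LocallyUnseparatedOn {K ι : Type*} [TopologicalSpace K] [Preorder ι] (A B : ι → Set K)
    (M : Set K) : Prop :=
  ∀ x ∈ M, ∀ i j, x ∈ A i → x ∈ B j →
    ∃ O ∈ 𝓝[M] x, ∀ k ∈ Icc i j, Disjoint O (A k) ∨ Disjoint O (B k)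

/-- `S` is negligible if, for some `i`, it misses `A i ∩ B j` for all `j > i`. When `A` decreases
and every sequence of indices is strictly bounded above, the negligible sets form a `σ`-ideal. -/
def IsNegligible {K ι : Type*} [Preorder ι] (A B : ι → Set K) (S : Set K) : Prop :=
  ∃ i, ∀ j, i < j → Disjoint S (A i ∩ B j)

namespace LocallyUnseparatedOn

variable {K ι κ : Type*} [TopologicalSpace K] [Preorder ι] [Preorder κ] {A B : ι → Set K}
  {M : Set K}

theorem comp (h : LocallyUnseparatedOn A B M) (e : κ ↪o ι) :
    LocallyUnseparatedOn (A ∘ e) (B ∘ e) M := fun x hx i j hi hj ↦ by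
  obtain ⟨O, hO, hOk⟩ := h x hx (e i) (e j) hi hj
  exact ⟨O, hO, fun k hk ↦ hOk (e k) ⟨e.monotone hk.1, e.monotone hk.2⟩⟩

theorem dual (h : LocallyUnseparatedOn A B M) :
    LocallyUnseparatedOn (B ∘ OrderDual.ofDual) (A ∘ OrderDual.ofDual) M := fun x hx i j hi hj ↦ by
  obtain ⟨O, hO, hOk⟩ := h x hx j.ofDual i.ofDual hj hi
  exact ⟨O, hO, fun k hk ↦ (hOk k.ofDual ⟨hk.2, hk.1⟩).symm⟩

theorem exists_disjoint_of_monotone (h : LocallyUnseparatedOn A B M) (hB : Monotone B) {R : Set K}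
    (hR : IsCompact R) {i j : ι} (hRM : R ⊆ M ∩ (A i ∩ B j)) {c : ℕ → ι} (hc : Monotone c)
    (hcij : ∀ n, c n ∈ Icc i j) : ∃ n, Disjoint R (A (c n) ∩ B (c (n + 1))) := by
  by_contra! hmeets
  simp only [not_disjoint_iff] at hmeets
  choose x hxR hxA hxB using hmeets
  obtain ⟨y, hyR, hy⟩ := hR.exists_mapClusterPt (f := atTop) (u := x)
    (le_principal_iff.2 (mem_map.2 (univ_mem' hxR)))
  obtain ⟨hyM, hyA, hyB⟩ := hRM hyR
  obtain ⟨O, hO, hOk⟩ := h y hyM i j hyA hyB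
  obtain ⟨W, hW, hWO⟩ := mem_nhdsWithin_iff_exists_mem_nhds_inter.1 hO
  have hxO (n : ℕ) (hn : x n ∈ W) : x n ∈ O := hWO ⟨hn, (hRM (hxR n)).1⟩
  have hfreq := frequently_atTop.1 (mapClusterPt_iff_frequently.1 hy W hW)
  obtain ⟨m, -, hm⟩ := hfreq 0
  obtain ⟨n, hmn, hn⟩ := hfreq (m + 1)
  rcases hOk (c n) (hcij n) with hdisj | hdisj
  · exact disjoint_left.1 hdisj (hxO n hn) (hxA n)
  · exact disjoint_left.1 hdisj (hxO m hm) (hB (hc hmn) (hxB m))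

end LocallyUnseparatedOn

namespace IsNegligible

variable {K ι : Type*} [Preorder ι] {A B : ι → Set K} {S T : Set K}

theorem mono (hT : IsNegligible A B T) (hST : S ⊆ T) : IsNegligible A B S :=
  hT.imp fun _ hi j hij ↦ (hi j hij).mono_left hST

theorem iUnion (hA : Antitone A) (hι : ∀ u : ℕ → ι, ∃ s, ∀ n, u n < s) {S : ℕ → Set K}
    (hS : ∀ n, IsNegligible A B (S n)) : IsNegligible A B (⋃ n, S n) := by
  choose i hi using hS
  obtain ⟨s, hs⟩ := hι i
  refine ⟨s, fun j hsj ↦ disjoint_iUnion_left.2 fun n ↦ ?_⟩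
  exact (hi n j ((hs n).trans hsj)).mono_right (inter_subset_inter_left _ (hA (hs n).le))

theorem not_iff :
    ¬ IsNegligible A B S ↔ ∀ i, ∃ j, i < j ∧ (S ∩ (A i ∩ B j)).Nonempty := by
  simp only [IsNegligible, not_exists, not_forall, exists_prop, not_disjoint_iff_nonempty_inter]

end IsNegligible

namespace IsOverlappingPair

variable {K ι κ : Type*} [TopologicalSpace K]

section Preorder

variable [Preorder ι] [Preorder κ] {A B : ι → Set K}

theorem comp (h : IsOverlappingPair A B) (e : κ ↪o ι) : IsOverlappingPair (A ∘ e) (B ∘ e) where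
  isClosed_left i := h.isClosed_left (e i)
  isClosed_right i := h.isClosed_right (e i)
  antitone_left := h.antitone_left.comp_monotone e.monotone
  monotone_right := h.monotone_right.comp e.monotone
  inter_nonempty i j hij := h.inter_nonempty (e i) (e j) (e.strictMono hij)

theorem dual (h : IsOverlappingPair A B) :
    IsOverlappingPair (B ∘ OrderDual.ofDual) (A ∘ OrderDual.ofDual) where
  isClosed_left i := h.isClosed_right i.ofDual
  isClosed_right i := h.isClosed_left i.ofDual
  antitone_left _ _ hij := h.monotone_right hij
  monotone_right _ _ hij := h.antitone_left hij
  inter_nonempty i j hij := inter_comm (A j.ofDual) _ ▸ h.inter_nonempty j.ofDual i.ofDual hij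

theorem isClosed_inter (h : IsOverlappingPair A B) (i j : ι) : IsClosed (A i ∩ B j) :=
  (h.isClosed_left i).inter (h.isClosed_right j)

theorem inter_subset_inter (h : IsOverlappingPair A B) {i i' j j' : ι} (hi : i ≤ i')
    (hj : j' ≤ j) : A i' ∩ B j' ⊆ A i ∩ B j :=
  Set.inter_subset_inter (h.antitone_left hi) (h.monotone_right hj)

variable [CompactSpace K]

theorem not_isNegligible_iInter (h : IsOverlappingPair A B)
    (hι : ∀ u : ℕ → ι, ∃ s, ∀ n, u n < s) {P : ℕ → Set K} (hP : Antitone P)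
    (hclosed : ∀ n, IsClosed (P n)) (hneg : ∀ n, ¬ IsNegligible A B (P n)) :
    ¬ IsNegligible A B (⋂ n, P n) := by
  refine IsNegligible.not_iff.2 fun i ↦ ?_
  choose j hij hj using fun n ↦ IsNegligible.not_iff.1 (hneg n) i
  obtain ⟨s, hs⟩ := hι j
  have hclosed' (n : ℕ) : IsClosed (P n ∩ (A i ∩ B s)) := (hclosed n).inter (h.isClosed_inter i s)
  have hne := IsCompact.nonempty_iInter_of_sequence_nonempty_isCompact_isClosed
    (fun n ↦ P n ∩ (A i ∩ B s)) (fun n ↦ inter_subset_inter_left _ (hP n.le_succ))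
    (fun n ↦ (hj n).mono (inter_subset_inter_right _ (h.inter_subset_inter le_rfl (hs n).le)))
    (hclosed' 0).isCompact hclosed'
  rw [← iInter_inter] at hne
  exact ⟨s, (hij 0).trans (hs 0), hne⟩

theorem isNegligible_of_sdiff (h : IsOverlappingPair A B) (hι : ∀ u : ℕ → ι, ∃ s, ∀ n, u n < s)
    {M R : Set K} (hM : LocallyUnseparatedOn A B M) (hR : IsClosed R)
    (hRM : IsNegligible A B (R \ M)) : IsNegligible A B R := by
  obtain ⟨a, ha⟩ := hRM
  by_contra hneg
  choose next hlt hmeets using IsNegligible.not_iff.1 hneg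
  let c : ℕ → ι := fun n ↦ next^[n] a
  have hc_succ (n : ℕ) : c (n + 1) = next (c n) := Function.iterate_succ_apply' next n a
  have hc : Monotone c := monotone_nat_of_le_succ fun n ↦ hc_succ n ▸ (hlt (c n)).le
  obtain ⟨s, hs⟩ := hι c
  have hsub : R ∩ (A a ∩ B s) ⊆ M ∩ (A a ∩ B s) := fun x hx ↦ by
    by_contra hxM
    exact disjoint_left.1 (ha s (hs 0)) ⟨hx.1, fun hx' ↦ hxM ⟨hx', hx.2⟩⟩ hx.2
  obtain ⟨n, hn⟩ := hM.exists_disjoint_of_monotone h.monotone_right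
    (hR.inter (h.isClosed_inter a s)).isCompact hsub hc fun n ↦ ⟨hc n.zero_le, (hs n).le⟩
  obtain ⟨x, hxR, hx⟩ := hmeets (c n)
  rw [← hc_succ] at hx
  exact disjoint_left.1 hn ⟨hxR, h.inter_subset_inter (hc n.zero_le) (hs (n + 1)).le hx⟩ hx

theorem exists_subset_isNegligible_inter [Nonempty ι] (h : IsOverlappingPair A B)
    (hι : ∀ u : ℕ → ι, ∃ s, ∀ n, u n < s) {M P : Set K} (hM : LocallyUnseparatedOn A B M)
    (hM' : IsLocallyClosed M) (hP : IsClosed P) (hneg : ¬ IsNegligible A B P) :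
    ∃ Q ⊆ P, IsClosed Q ∧ ¬ IsNegligible A B Q ∧ IsNegligible A B (Q ∩ M) := by
  by_cases hQ : IsNegligible A B ((P ∩ closure M) \ M)
  · have hclosure := h.isNegligible_of_sdiff hι hM (hP.inter isClosed_closure) hQ
    exact ⟨P, subset_rfl, hP, hneg, hclosure.mono (inter_subset_inter_right P subset_closure)⟩
  · have hclosed : IsClosed ((P ∩ closure M) \ M) := by
      rw [inter_sdiff_assoc]
      exact hP.inter (isOpen_compl_iff.1 hM'.isOpen_coborder)
    refine ⟨_, fun x hx ↦ hx.1.1, hclosed, hQ, ?_⟩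
    rw [sdiff_inter_self]
    exact ⟨Classical.arbitrary ι, fun j _ ↦ empty_disjoint _⟩

theorem exists_isNegligible_inter [Nonempty ι] (h : IsOverlappingPair A B)
    (hι : ∀ u : ℕ → ι, ∃ s, ∀ n, u n < s) {H : ℕ → Set K}
    (hloc : ∀ n, LocallyUnseparatedOn A B (H n)) (hH : ∀ n, IsLocallyClosed (H n)) :
    ∃ P, ¬ IsNegligible A B P ∧ ∀ n, IsNegligible A B (P ∩ H n) := by
  let Big := {P : Set K // IsClosed P ∧ ¬ IsNegligible A B P}
  have hstep (n : ℕ) (P : Big) : ∃ Q : Big, Q.1 ⊆ P.1 ∧ IsNegligible A B (Q.1 ∩ H n) := by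
    obtain ⟨Q, hQP, hQ, hneg, hQH⟩ :=
      h.exists_subset_isNegligible_inter hι (hloc n) (hH n) P.2.1 P.2.2
    exact ⟨⟨Q, hQ, hneg⟩, hQP, hQH⟩
  choose next hnext hnegl using hstep
  have huniv : ¬ IsNegligible A B (univ : Set K) := IsNegligible.not_iff.2 fun i ↦ by
    obtain ⟨s, hs⟩ := hι fun _ ↦ i
    exact ⟨s, hs 0, (univ_inter _).symm ▸ h.inter_nonempty i s (hs 0)⟩
  let P : ℕ → Big := fun n ↦ Nat.rec ⟨univ, isClosed_univ, huniv⟩ next n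
  refine ⟨⋂ n, (P n).1, h.not_isNegligible_iInter hι
    (antitone_nat_of_succ_le fun n ↦ hnext n (P n)) (fun n ↦ (P n).2.1) fun n ↦ (P n).2.2,
    fun n ↦ ?_⟩
  exact (hnegl n (P n)).mono (inter_subset_inter_left _ (iInter_subset (fun n ↦ (P n).1) (n + 1)))

theorem exists_rel_forall_not_rel [T2Space K] (h : IsOverlappingPair A B) {H : ℕ → Set K}
    (hloc : ∀ n, LocallyUnseparatedOn A B (H n)) (hH : ∀ n, IsLocallyClosed (H n))
    (hcover : ⋃ n, H n = univ) {r : ι → ι → Prop} (hr : ∀ i j, r i j → i < j)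
    (hne : ∃ i j, r i j) : ∃ i j, r i j ∧ ∀ k, r i k → ¬ r k j := by
  by_contra! hbetween
  obtain ⟨i₀, j₀, hij₀⟩ := hne
  obtain ⟨P, hP, hPmeets, _, ⟨i, j, hij, rfl⟩, n, hPH⟩ :=
    exists_isClosed_inter_subset_of_iUnion_isLocallyClosed hH hcover
      (𝓔 := {S | ∃ i j, r i j ∧ A i ∩ B j = S}) ⟨_, i₀, j₀, hij₀, rfl⟩
      (by rintro _ ⟨i, j, -, rfl⟩; exact h.isClosed_inter i j)
      (by rintro _ ⟨i, j, hij, rfl⟩; exact h.inter_nonempty i j (hr i j hij))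
  obtain ⟨c, hc₀, hc⟩ := exists_seq_of_forall_exists_between hbetween hij
  have hcmono : Monotone c := monotone_nat_of_le_succ fun n ↦ (hr _ _ (hc n).1).le
  have hcij (n : ℕ) : c n ∈ Icc i j := ⟨hc₀ ▸ hcmono n.zero_le, (hr _ _ (hc n).2).le⟩
  obtain ⟨m, hm⟩ := (hloc n).exists_disjoint_of_monotone h.monotone_right
    (hP.inter (h.isClosed_inter i j)).isCompact (subset_inter hPH inter_subset_right) hcmono hcij
  obtain ⟨x, hxP, hx⟩ := hPmeets _ ⟨c m, c (m + 1), (hc m).1, rfl⟩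
  have hxij := h.inter_subset_inter (hcij m).1 (hcij (m + 1)).2 hx
  exact disjoint_left.1 hm ⟨hxP, hxij⟩ hx

end Preorder

section LinearOrder

variable [CompactSpace K] [LinearOrder ι] {A B : ι → Set K} {H : ℕ → Set K}

theorem countable_of_countable_Iic (h : IsOverlappingPair A B)
    (hloc : ∀ n, LocallyUnseparatedOn A B (H n)) (hH : ∀ n, IsLocallyClosed (H n))
    (hcover : ⋃ n, H n = univ) (hι : ∀ x : ι, (Iic x).Countable) : Countable ι := by
  by_contra hunc
  rw [not_countable_iff] at hunc
  have hbdd := exists_forall_lt_of_countable_Iic hι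
  obtain ⟨P, hP, hPH⟩ := h.exists_isNegligible_inter hbdd hloc hH
  have hunion := IsNegligible.iUnion h.antitone_left hbdd hPH
  rw [← inter_iUnion, hcover, inter_univ] at hunion
  exact hP hunion

theorem countable_of_countable_Ici (h : IsOverlappingPair A B)
    (hloc : ∀ n, LocallyUnseparatedOn A B (H n)) (hH : ∀ n, IsLocallyClosed (H n))
    (hcover : ⋃ n, H n = univ) (hι : ∀ x : ι, (Ici x).Countable) : Countable ι :=
  h.dual.countable_of_countable_Iic (fun n ↦ (hloc n).dual) hH hcover hι

theorem countable_setOf_countable_uIcc (h : IsOverlappingPair A B)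
    (hloc : ∀ n, LocallyUnseparatedOn A B (H n)) (hH : ∀ n, IsLocallyClosed (H n))
    (hcover : ⋃ n, H n = univ) (x : ι) : {y | (uIcc x y).Countable}.Countable := by
  let above : Set ι := {y | x ≤ y ∧ (uIcc x y).Countable}
  let below : Set ι := {y | y ≤ x ∧ (uIcc x y).Countable}
  have habove : Countable above :=
    (h.comp (OrderEmbedding.subtype above)).countable_of_countable_Iic
      (fun n ↦ (hloc n).comp _) hH hcover fun y ↦
        (Countable.preimage y.2.2 Subtype.val_injective).mono
          fun z (hz : z ≤ y) ↦ Icc_subset_uIcc (α := ι) ⟨z.2.1, hz⟩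
  have hbelow : Countable below :=
    (h.comp (OrderEmbedding.subtype below)).countable_of_countable_Ici
      (fun n ↦ (hloc n).comp _) hH hcover fun y ↦
        (Countable.preimage y.2.2 Subtype.val_injective).mono
          fun z (hz : y ≤ z) ↦ Icc_subset_uIcc' (α := ι) ⟨hz, z.2.1⟩
  refine (habove.to_set.union hbelow.to_set).mono fun y hy ↦ ?_
  exact (le_total x y).imp (⟨·, hy⟩) (⟨·, hy⟩)

theorem countable [T2Space K] (h : IsOverlappingPair A B)
    (hloc : ∀ n, LocallyUnseparatedOn A B (H n)) (hH : ∀ n, IsLocallyClosed (H n))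
    (hcover : ⋃ n, H n = univ) : Countable ι := by
  by_contra hunc
  rw [not_countable_iff] at hunc
  have hclass := h.countable_setOf_countable_uIcc hloc hH hcover
  obtain ⟨i, j, hij, hnot⟩ := h.exists_rel_forall_not_rel hloc hH hcover
    (fun _ _ ↦ lt_of_not_countable_Icc) (exists_not_countable_Icc hclass)
  obtain ⟨k, hik, hkj⟩ := exists_not_countable_Icc_Icc hclass hij
  exact hnot k hik hkj

end LinearOrder

end IsOverlappingPair

namespace Prec

variable {K : Type*} [TopologicalSpace K] {f g h : C(K, ℝ)}

theorem eq_of_ne_zero (hfg : Prec f g) {x : K} (hx : f x ≠ 0) : f x = g x :=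
  hfg.2 x (subset_closure hx)

theorem eq_zero_of_eq_zero (hfg : Prec f g) {x : K} (hx : g x = 0) : f x = 0 := by
  by_contra hne
  exact hne ((hfg.eq_of_ne_zero hne).trans hx)

theorem asymm (hfg : Prec f g) : ¬ Prec g f := fun hgf ↦ hfg.1 <| by
  ext x
  by_cases hx : f x = 0
  · rw [hx, hgf.eq_zero_of_eq_zero hx]
  · exact hfg.eq_of_ne_zero hx

theorem trans (hfg : Prec f g) (hgh : Prec g h) : Prec f h := by
  refine ⟨?_, fun x hx ↦ ?_⟩
  · rintro rfl
    exact hfg.asymm hgh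
  · refine (hfg.2 x hx).trans (hgh.2 x (closure_mono (fun y hy ↦ ?_) hx))
    exact mt hfg.eq_zero_of_eq_zero hy

theorem forall_ne_zero_or_forall_eq_zero (hfg : Prec f g) {V : Set K} (hV : IsPreconnected V)
    (hg : ∀ x ∈ V, g x ≠ 0) : (∀ x ∈ V, f x ≠ 0) ∨ ∀ x ∈ V, f x = 0 := by
  refine or_iff_not_imp_right.2 fun hne ↦ ?_
  push Not at hne
  refine hV.subset_of_closure_inter_subset (isOpen_ne_fun f.continuous continuous_const) hne ?_
  rintro x ⟨hx, hxV⟩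
  exact (hfg.2 x hx).trans_ne (hg x hxV)

end Prec

theorem PrecDelta.exists_eq_zero_and_le_abs {K : Type*} [TopologicalSpace K] [CompactSpace K]
    {δ : ℝ} (hδ : 0 < δ) {f g : C(K, ℝ)} (hfg : PrecDelta δ f g) : ∃ x, f x = 0 ∧ δ ≤ |g x| := by
  obtain ⟨x, hx⟩ : ∃ x, δ ≤ ‖(f - g) x‖ := by
    by_contra! hlt
    exact hfg.2.not_gt ((ContinuousMap.norm_lt_iff _ hδ).2 hlt)
  have hfx : f x = 0 := by
    by_contra hne
    rw [ContinuousMap.sub_apply, hfg.1.eq_of_ne_zero hne, sub_self, norm_zero] at hx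
    exact hx.not_gt hδ
  exact ⟨x, hfx, by simpa [hfx] using hx⟩

theorem isOverlappingPair_of_precDelta {K ι : Type*} [TopologicalSpace K] [CompactSpace K]
    [PartialOrder ι] {δ : ℝ} (hδ : 0 < δ) {f : ι → C(K, ℝ)}
    (hf : ∀ i j, i < j → PrecDelta δ (f i) (f j)) :
    IsOverlappingPair (fun i ↦ {x | f i x = 0}) (fun i ↦ {x | δ ≤ |f i x|}) where
  isClosed_left i := isClosed_eq (f i).continuous continuous_const
  isClosed_right i := isClosed_le continuous_const (f i).continuous.abs
  antitone_left := antitone_iff_forall_lt.2 fun i j hij _ ↦ (hf i j hij).1.eq_zero_of_eq_zero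
  monotone_right := monotone_iff_forall_lt.2 fun i j hij x (hx : δ ≤ |f i x|) ↦
    hx.trans_eq (congrArg abs ((hf i j hij).1.eq_of_ne_zero (abs_pos.1 (hδ.trans_le hx))))
  inter_nonempty i j hij := (hf i j hij).exists_eq_zero_and_le_abs hδ

theorem locallyUnseparatedOn_of_prec {K ι : Type*} [TopologicalSpace K] [PartialOrder ι]
    {δ : ℝ} (hδ : 0 < δ) {f : ι → C(K, ℝ)} (hf : ∀ i j, i < j → Prec (f i) (f j)) {M : Set K}
    (hM : ∀ t, ∀ ht : t ∈ M, HasConnBase (closure M) t (subset_closure ht)) :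
    LocallyUnseparatedOn (fun i ↦ {x | f i x = 0}) (fun i ↦ {x | δ ≤ |f i x|}) M := by
  intro x hx _ j _ (hxj : δ ≤ |f j x|)
  obtain ⟨V, hVo, hVc, hxV, hV⟩ := hM x hx {y | f j y ≠ 0}
    (isOpen_ne_fun ((f j).continuous.comp continuous_subtype_val) continuous_const)
    (abs_pos.1 (hδ.trans_le hxj))
  have hVpre : IsPreconnected (Subtype.val '' V) :=
    hVc.isPreconnected.image _ continuous_subtype_val.continuousOn
  have hfj : ∀ y ∈ Subtype.val '' V, f j y ≠ 0 := forall_mem_image.2 fun y hy ↦ hV hy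
  have hVnhds : Subtype.val '' V ∈ 𝓝[M] x :=
    nhdsWithin_mono x subset_closure <| map_nhds_subtype_val (⟨x, subset_closure hx⟩ : closure M) ▸
      image_mem_map (hVo.mem_nhds hxV)
  refine ⟨Subtype.val '' V, hVnhds, fun k hk ↦ ?_⟩
  have hfk : (∀ y ∈ Subtype.val '' V, f k y ≠ 0) ∨ ∀ y ∈ Subtype.val '' V, f k y = 0 := by
    rcases hk.2.eq_or_lt with rfl | hkj
    · exact Or.inl hfj
    · exact (hf k j hkj).forall_ne_zero_or_forall_eq_zero hVpre hfj
  refine hfk.imp (fun hne ↦ disjoint_left.2 hne) fun hzero ↦ disjoint_left.2 fun y hy hδy ↦ ?_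
  exact abs_pos.1 (hδ.trans_le hδy) (hzero y hy)

theorem countable_of_forall_lt_precDelta {K ι : Type*} [TopologicalSpace K] [CompactSpace K]
    [T2Space K] [LinearOrder ι] {δ : ℝ} (hδ : 0 < δ) {f : ι → C(K, ℝ)}
    (hf : ∀ i j, i < j → PrecDelta δ (f i) (f j)) {H : ℕ → Set K}
    (hH : ∀ n, IsLocallyClosed (H n)) (hcover : ⋃ n, H n = univ)
    (hconn : ∀ n, ∀ t, ∀ ht : t ∈ H n, HasConnBase (closure (H n)) t (subset_closure ht)) :
    Countable ι :=
  (isOverlappingPair_of_precDelta hδ hf).countable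
    (fun n ↦ locallyUnseparatedOn_of_prec hδ (fun i j hij ↦ (hf i j hij).1) (hconn n)) hH hcover

namespace IsPrecChain

variable {K : Type*} [TopologicalSpace K] [CompactSpace K] {δ : ℝ} {F : Set C(K, ℝ)}

theorem isStrictTotalOrder (hF : IsPrecChain δ F) :
    IsStrictTotalOrder F fun f g ↦ Prec f.1 g.1 where
  trichotomous f g hfg hgf := by
    by_contra hne
    exact (hF f f.2 g g.2 (Subtype.coe_ne_coe.2 hne)).elim (hfg ·.1) (hgf ·.1)
  irrefl f hff := hff.1 rfl
  trans _ _ _ := Prec.trans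

theorem precDelta_of_prec (hF : IsPrecChain δ F) {f g : C(K, ℝ)} (hf : f ∈ F) (hg : g ∈ F)
    (hfg : Prec f g) : PrecDelta δ f g :=
  (hF f hf g hg hfg.1).resolve_right fun hgf ↦ hfg.asymm hgf.1

end IsPrecChain

/-- **Theorem 3.6 (3).** If `K = ⋃ₙ Hₙ` where each `Hₙ` is open in its closure and
every point of `Hₙ` has a local base of connected sets relative to `cl(Hₙ)`, then `K`
has the Bishop property (B). -/
theorem stmt9 {K : Type*} [TopologicalSpace K] [CompactSpace K] [T2Space K]
    (H : ℕ → Set K) (hcover : (⋃ n, H n) = univ)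
    (hopen : ∀ n, ∃ U : Set K, IsOpen U ∧ H n = U ∩ closure (H n))
    (hconn : ∀ n, ∀ t, ∀ ht : t ∈ H n, HasConnBase (closure (H n)) t (subset_closure ht)) :
    HasBishop K := by
  intro δ hδ F hF
  have hH (n : ℕ) : IsLocallyClosed (H n) := by
    obtain ⟨U, hU, hHU⟩ := hopen n
    exact ⟨U, closure (H n), hU, isClosed_closure, hHU⟩
  have := hF.isStrictTotalOrder
  classical
  -- `F` also inherits the pointwise order of `C(K, ℝ)`, which is not the one meant here.
  let : LinearOrder F := linearOrderOfSTO fun f g ↦ Prec f.1 g.1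
  exact countable_coe_iff.1 <| countable_of_forall_lt_precDelta hδ (f := fun f : F ↦ f.1)
    (fun f g hfg ↦ hF.precDelta_of_prec f.2 g.2 hfg) hH hcover hconn
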